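/- Theorem 4.1, full statement (privacy of all L dataset vectors). Let X be a measurable space, n ≥ 1, d ≥ 1, L ≥ 1. For each layer ℓ ∈ Fin L let C_ℓ > 0 and let φ_ℓ : X → EuclideanSpace ℝ (Fin d) be a measurable map with ‖φ_ℓ(x)‖ ≤ C_ℓ for all x ∈ X. Let ε ∈ (0, 1], δ ∈ (0, 1), and suppose σ_ℓ ≥ (2C_ℓ/n) · √(2 · ln(1.25/δ)) / ε for every ℓ. Then the joint mechanism that, on input D : Fin n → X, outputs the tuple ((1/n) · Σ_{i} φ_ℓ(D i) + ξ_ℓ)_{ℓ ∈ Fin L} with independent ξ_ℓ ∼ N(0, σ_ℓ²I_d) — i.e., the product over ℓ of the pushforwards of N(0, σ_ℓ²I_d) under x ↦ (1/n) · Σ_{i} φ_ℓ(D i) + x — satisfies (L·ε, L·δ)-differential privacy under the substitution neighboring relation. -/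

import Mathlib

/-!
The joint mechanism is private because each layer is `(ε, δ)`-private and privacy composes over
independent releases.

*One layer.* Let `p`, `q` be the densities of two Gaussians with the same `σ` and means `u` apart,
and let `y = log (p / q) - ε`. If `1 - exp (-y) ≤ c * exp (k * y)` for all real `y`, then
multiplying by `p` gives `p ≤ exp ε * q + c * exp (-k ε) * p ^ (1 + k) / q ^ k` pointwise. Completing
the square, `p ^ (1 + k) / q ^ k` is `exp (k (k + 1) ‖u‖² / (2 σ²))` times the density of a third
translate of the same Gaussian. Hence, as measures, `P ≤ exp ε • Q + R` where `R` has explicit mass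
(`gaussian_translate_le`). For `s² = 2 log (1.25 / δ)` and `‖u‖ / σ ≤ ε / s` this mass is at most `δ`
for a suitable pair `(c, k)`: `(1/4, 1)` when `s² ≤ 2`, and `k = s² / ε - 1/2`, `c = 1 / (1 + k)`
when `s² ≥ 2` (`exists_tilt`).

*Composition.* If `P i ≤ e • Q i + R i` with `R i` of mass at most `r`, slicing along the first
coordinate and truncating the bound for the slices at `1` gives, by induction on the number `k` of
factors, `Measure.pi P O ≤ e ^ k * Measure.pi Q O + k * r` (`pi_le_of_le`).
-/

open MeasureTheory
open scoped BigOperators ENNReal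

/-- Two size-`n` datasets are neighboring under the substitution relation:
they differ in exactly one coordinate. -/
def Neighbors {X : Type*} {n : ℕ} (D D' : Fin n → X) : Prop :=
  ∃ j : Fin n, D j ≠ D' j ∧ ∀ i : Fin n, i ≠ j → D i = D' i

/-- `(ε, δ)`-differential privacy of a mechanism on size-`n` datasets. -/
def DP {X : Type*} [MeasurableSpace X] {Ω : Type*} [MeasurableSpace Ω] {n : ℕ}
    (M : (Fin n → X) → Measure Ω) (ε δ : ℝ) : Prop :=
  ∀ D D' : Fin n → X, Neighbors D D' → ∀ O : Set Ω, MeasurableSet O →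
    M D O ≤ ENNReal.ofReal (Real.exp ε) * M D' O + ENNReal.ofReal δ

/-- The centered Gaussian measure `N(0, σ² I_d)` on `EuclideanSpace ℝ (Fin d)`,
given by its density with respect to Lebesgue measure. -/
noncomputable def gaussianMeasure (d : ℕ) (σ : ℝ) : Measure (EuclideanSpace ℝ (Fin d)) :=
  volume.withDensity fun x =>
    ENNReal.ofReal ((2 * Real.pi * σ ^ 2) ^ (-(d : ℝ) / 2) *
      Real.exp (-‖x‖ ^ 2 / (2 * σ ^ 2)))

lemma one_sub_exp_neg_le_quarter (y : ℝ) : 1 - Real.exp (-y) ≤ 1 / 4 * Real.exp (1 * y) := by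
  have h : Real.exp (-y) * Real.exp y = 1 := by rw [← Real.exp_add]; simp
  rw [one_mul]
  nlinarith [Real.exp_pos y, Real.exp_pos (-y),
    mul_nonneg (Real.exp_pos (-y)).le (sq_nonneg (Real.exp y / 2 - 1))]

lemma one_sub_exp_neg_le_inv {k : ℝ} (hk : 0 ≤ k) (y : ℝ) :
    1 - Real.exp (-y) ≤ 1 / (1 + k) * Real.exp (k * y) := by
  have h1 := Real.add_one_le_exp (k * y)
  have h2 := mul_le_mul_of_nonneg_left (Real.add_one_le_exp (-y)) hk
  rw [div_mul_eq_mul_div, le_div_iff₀ (by positivity)]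
  nlinarith [Real.exp_pos (-y)]

/-- The choice of exponent `k` and constant `c`. Here `t` stands for `‖u‖² / σ²`, the squared
sensitivity-to-noise ratio, and `2 * log (1.25 / δ)` is the `s²` of the noise calibration. -/
lemma exists_tilt {ε δ t : ℝ} (hε : 0 < ε) (hε1 : ε ≤ 1) (hδ0 : 0 < δ) (hδ1 : δ < 1)
    (ht : t ≤ ε ^ 2 / (2 * Real.log (1.25 / δ))) :
    ∃ k c : ℝ, 0 ≤ k ∧ 0 ≤ c ∧ (∀ y : ℝ, 1 - Real.exp (-y) ≤ c * Real.exp (k * y)) ∧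
      c * Real.exp (k * (k + 1) * t / 2 - k * ε) ≤ δ := by
  obtain ⟨x, hx⟩ : ∃ x, x = 2 * Real.log (1.25 / δ) := ⟨_, rfl⟩
  rw [← hx] at ht
  have hδx : δ = 5 / 4 * Real.exp (-(x / 2)) := by
    rw [hx, mul_div_cancel_left₀ _ two_ne_zero, ← Real.log_inv, Real.exp_log (by positivity)]
    field_simp
    norm_num
  have hlog2 := Real.log_two_gt_d9
  -- Since `1.25 ^ 13 > 2 ^ 4`.
  have hl125 : 0.213 ≤ Real.log 1.25 := by
    have h : Real.log (2 ^ 4) ≤ Real.log (1.25 ^ 13) :=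
      Real.log_le_log (by norm_num) (by norm_num)
    rw [Real.log_pow, Real.log_pow] at h
    push_cast at h
    linarith
  -- Since `5 ^ 7 > 2 ^ 16`.
  have hl5 : 1.58 ≤ Real.log 5 := by
    have h : Real.log (2 ^ 16) ≤ Real.log (5 ^ 7) :=
      Real.log_le_log (by norm_num) (by norm_num)
    rw [Real.log_pow, Real.log_pow] at h
    push_cast at h
    linarith
  have hxl : 0.426 ≤ x := by
    have h : Real.log 1.25 ≤ Real.log (1.25 / δ) := by
      apply Real.log_le_log (by norm_num)
      rw [le_div_iff₀ hδ0]
      linarith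
    linarith
  have hx0 : 0 < x := by linarith
  rcases le_total x 2 with h2 | h2
  · refine ⟨1, 1 / 4, by norm_num, by norm_num, one_sub_exp_neg_le_quarter, ?_⟩
    have key : 1 * (1 + 1) * t / 2 - 1 * ε ≤ Real.log 5 - x / 2 := by
      have h3 : ε ^ 2 / x - ε + x / 2 ≤ 1.58 := by
        have h4 : ε ^ 2 / x ≤ ε / x := by gcongr; nlinarith
        have h5 : ε / x - ε = ε * (1 / x - 1) := by ring
        rcases le_total 1 x with h6 | h6
        · have : 1 / x ≤ 1 := by rw [div_le_one hx0]; exact h6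
          nlinarith
        · have h7 : 1 ≤ 1 / x := by rw [le_div_iff₀ hx0]; linarith
          have h8 : 1 / x + x / 2 ≤ 2.58 := by
            rw [div_add' _ _ _ hx0.ne', div_le_iff₀ hx0]
            nlinarith
          nlinarith
      linarith
    calc 1 / 4 * Real.exp (1 * (1 + 1) * t / 2 - 1 * ε)
        ≤ 1 / 4 * Real.exp (Real.log 5 - x / 2) := by gcongr
      _ = δ := by
        rw [sub_eq_add_neg, Real.exp_add, Real.exp_log (by norm_num), hδx]; ring
  · have hxε : 2 ≤ x / ε := by rw [le_div_iff₀ hε]; linarith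
    have hk : 0 ≤ x / ε - 1 / 2 := by linarith
    refine ⟨x / ε - 1 / 2, 1 / (1 + (x / ε - 1 / 2)), hk, by positivity,
      one_sub_exp_neg_le_inv hk, ?_⟩
    -- This `k` minimizes `k (k + 1) ε² / (2 x) - k ε`.
    have key : (x / ε - 1 / 2) * ((x / ε - 1 / 2) + 1) * t / 2 - (x / ε - 1 / 2) * ε
        ≤ 1 / 2 + -(x / 2) := by
      calc (x / ε - 1 / 2) * ((x / ε - 1 / 2) + 1) * t / 2 - (x / ε - 1 / 2) * ε
          ≤ (x / ε - 1 / 2) * ((x / ε - 1 / 2) + 1) * (ε ^ 2 / x) / 2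
              - (x / ε - 1 / 2) * ε := by gcongr
        _ = -(x / 2) + ε / 2 - ε ^ 2 / (8 * x) := by field_simp; ring
        _ ≤ 1 / 2 + -(x / 2) := by
          have : 0 ≤ ε ^ 2 / (8 * x) := by positivity
          linarith
    have he : Real.exp (1 / 2) ≤ 3 := by
      have : Real.exp (1 / 2) ≤ Real.exp 1 := Real.exp_le_exp.2 (by norm_num)
      linarith [Real.exp_one_lt_d9]
    have hc : 1 / (1 + (x / ε - 1 / 2)) ≤ 2 / 5 := by
      rw [div_le_iff₀ (by linarith)]; linarith
    calc _ ≤ 2 / 5 * Real.exp (1 / 2 + -(x / 2)) := by gcongr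
      _ = (2 / 5 * Real.exp (1 / 2)) * Real.exp (-(x / 2)) := by rw [Real.exp_add]; ring
      _ ≤ 5 / 4 * Real.exp (-(x / 2)) := by gcongr; linarith
      _ = δ := hδx.symm

/-- The density of `gaussianMeasure d σ`. -/
noncomputable def gaussianDensity (d : ℕ) (σ : ℝ) (x : EuclideanSpace ℝ (Fin d)) : ℝ :=
  (2 * Real.pi * σ ^ 2) ^ (-(d : ℝ) / 2) * Real.exp (-‖x‖ ^ 2 / (2 * σ ^ 2))

lemma gaussianDensity_nonneg (d : ℕ) (σ : ℝ) (x : EuclideanSpace ℝ (Fin d)) :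
    0 ≤ gaussianDensity d σ x := by
  unfold gaussianDensity; positivity

lemma measurable_gaussianDensity (d : ℕ) (σ : ℝ) : Measurable (gaussianDensity d σ) := by
  unfold gaussianDensity; fun_prop

lemma isProbabilityMeasure_gaussianMeasure (d : ℕ) {σ : ℝ} (hσ : 0 < σ) :
    IsProbabilityMeasure (gaussianMeasure d σ) := by
  constructor
  have hb : 0 < 1 / (2 * σ ^ 2) := by positivity
  have hint : ∫ x, gaussianDensity d σ x = 1 := by
    have h := GaussianFourier.integral_rexp_neg_mul_sq_norm
      (V := EuclideanSpace ℝ (Fin d)) hb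
    unfold gaussianDensity
    rw [integral_const_mul]
    have h2 : ∀ v : EuclideanSpace ℝ (Fin d),
        -‖v‖ ^ 2 / (2 * σ ^ 2) = -(1 / (2 * σ ^ 2)) * ‖v‖ ^ 2 := fun v => by ring
    simp_rw [h2, h]
    rw [finrank_euclideanSpace_fin, show Real.pi / (1 / (2 * σ ^ 2)) = 2 * Real.pi * σ ^ 2 by
      field_simp, ← Real.rpow_add (by positivity)]
    rw [show -(d : ℝ) / 2 + d / 2 = 0 by ring, Real.rpow_zero]
  have hi : Integrable (gaussianDensity d σ) := by
    by_contra hcon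
    rw [integral_undef hcon] at hint
    exact zero_ne_one hint
  change (volume.withDensity fun x => ENNReal.ofReal (gaussianDensity d σ x)) Set.univ = 1
  rw [withDensity_apply _ MeasurableSet.univ, Measure.restrict_univ,
    ← ofReal_integral_eq_lintegral_ofReal hi (ae_of_all _ (gaussianDensity_nonneg d σ)), hint,
    ENNReal.ofReal_one]

lemma map_add_gaussianMeasure (d : ℕ) (σ : ℝ) (a : EuclideanSpace ℝ (Fin d)) :
    (gaussianMeasure d σ).map (fun x => a + x) =
      volume.withDensity fun x => ENNReal.ofReal (gaussianDensity d σ (x - a)) := by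
  ext s hs
  have hm : Measurable fun x : EuclideanSpace ℝ (Fin d) => a + x := measurable_const_add a
  rw [Measure.map_apply hm hs, withDensity_apply _ hs]
  change (volume.withDensity fun x => ENNReal.ofReal (gaussianDensity d σ x)) _ = _
  rw [withDensity_apply _ (hm hs), ← lintegral_indicator (hm hs), ← lintegral_indicator hs,
    ← lintegral_add_left_eq_self (s.indicator _) a]
  congr 1 with x
  simp only [Set.indicator, add_sub_cancel_left]
  rfl

/-- Pointwise privacy inequality for the densities of two Gaussians whose means are `u` apart; the
last density is that of the exponential tilt of the first by `k` times the log-likelihood ratio. -/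
lemma gaussianDensity_le {d : ℕ} {σ ε k c : ℝ} (hσ : 0 < σ)
    (hc : ∀ y : ℝ, 1 - Real.exp (-y) ≤ c * Real.exp (k * y))
    (u y : EuclideanSpace ℝ (Fin d)) :
    gaussianDensity d σ y ≤ Real.exp ε * gaussianDensity d σ (y + u) +
      c * Real.exp (k * (k + 1) * (‖u‖ ^ 2 / σ ^ 2) / 2 - k * ε) *
        gaussianDensity d σ (y - k • u) := by
  obtain ⟨Y, hY⟩ : ∃ Y, Y = (‖y + u‖ ^ 2 - ‖y‖ ^ 2) / (2 * σ ^ 2) - ε := ⟨_, rfl⟩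
  have h := mul_le_mul_of_nonneg_right (hc Y) (Real.exp_pos (-‖y‖ ^ 2 / (2 * σ ^ 2))).le
  have e1 : Real.exp (-Y) * Real.exp (-‖y‖ ^ 2 / (2 * σ ^ 2)) =
      Real.exp ε * Real.exp (-‖y + u‖ ^ 2 / (2 * σ ^ 2)) := by
    rw [← Real.exp_add, ← Real.exp_add, hY]; congr 1; ring
  have e2 : Real.exp (k * Y) * Real.exp (-‖y‖ ^ 2 / (2 * σ ^ 2)) =
      Real.exp (k * (k + 1) * (‖u‖ ^ 2 / σ ^ 2) / 2 - k * ε) *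
        Real.exp (-‖y - k • u‖ ^ 2 / (2 * σ ^ 2)) := by
    rw [← Real.exp_add, ← Real.exp_add, hY, norm_add_sq_real, norm_sub_sq_real, norm_smul,
      inner_smul_right, mul_pow, Real.norm_eq_abs, sq_abs]
    congr 1
    field_simp
    ring
  rw [sub_mul, one_mul, e1, mul_assoc, e2] at h
  unfold gaussianDensity
  have hA : (0 : ℝ) ≤ (2 * Real.pi * σ ^ 2) ^ (-(d : ℝ) / 2) := by positivity
  nlinarith [mul_le_mul_of_nonneg_left h hA]

/-- Two translates of a Gaussian satisfy an approximate domination of measures whose error term is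
a multiple of a third translate. -/
lemma gaussian_translate_le {d : ℕ} {σ ε k c : ℝ} (hσ : 0 < σ) (hc0 : 0 ≤ c)
    (hc : ∀ y : ℝ, 1 - Real.exp (-y) ≤ c * Real.exp (k * y))
    (a b : EuclideanSpace ℝ (Fin d)) :
    (gaussianMeasure d σ).map (fun x => a + x) ≤
      ENNReal.ofReal (Real.exp ε) • (gaussianMeasure d σ).map (fun x => b + x) +
      ENNReal.ofReal (c * Real.exp (k * (k + 1) * (‖a - b‖ ^ 2 / σ ^ 2) / 2 - k * ε)) •
        (gaussianMeasure d σ).map (fun x => (a + k • (a - b)) + x) := by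
  have hm : ∀ w : EuclideanSpace ℝ (Fin d),
      Measurable fun x => ENNReal.ofReal (gaussianDensity d σ (x - w)) := fun w =>
    ((measurable_gaussianDensity d σ).comp (measurable_id.sub_const w)).ennreal_ofReal
  rw [map_add_gaussianMeasure, map_add_gaussianMeasure, map_add_gaussianMeasure,
    ← withDensity_smul _ (hm _), ← withDensity_smul _ (hm _),
    ← withDensity_add_left ((hm _).const_smul _)]
  refine withDensity_mono (ae_of_all _ fun x => ?_)
  have h := gaussianDensity_le (ε := ε) hσ hc (a - b) (x - a)
  rw [sub_add_sub_cancel, sub_sub] at h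
  simp only [Pi.add_apply, Pi.smul_apply, smul_eq_mul]
  have n1 := gaussianDensity_nonneg d σ (x - b)
  have n2 := gaussianDensity_nonneg d σ (x - (a + k • (a - b)))
  rw [← ENNReal.ofReal_mul (by positivity), ← ENNReal.ofReal_mul (by positivity),
    ← ENNReal.ofReal_add (by positivity) (by positivity)]
  exact ENNReal.ofReal_le_ofReal h

/-- Basic composition for product measures. -/
lemma pi_le_of_le {E : Type*} [MeasurableSpace E] (e r : ℝ≥0∞) (k : ℕ)
    (P Q R : Fin k → Measure E) [∀ i, IsProbabilityMeasure (P i)]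
    [∀ i, IsProbabilityMeasure (Q i)]
    (h : ∀ i, P i ≤ e • Q i + R i) (hR : ∀ i, R i Set.univ ≤ r)
    (O : Set (Fin k → E)) (hO : MeasurableSet O) :
    Measure.pi P O ≤ e ^ k * Measure.pi Q O + k * r := by
  induction k with
  | zero =>
    rw [Measure.pi_of_empty P, Measure.pi_of_empty Q]
    simp
  | succ k ih =>
    let F := (MeasurableEquiv.piFinSuccAbove (fun _ : Fin (k + 1) => E) 0)
    have hO' : MeasurableSet (F.symm ⁻¹' O) := F.symm.measurable hO
    have slice : ∀ (S : Fin (k + 1) → Measure E) [∀ i, IsProbabilityMeasure (S i)],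
        Measure.pi S O = ∫⁻ y, Measure.pi (fun j : Fin k => S j.succ)
          (Prod.mk y ⁻¹' (F.symm ⁻¹' O)) ∂(S 0) := by
      intro S _
      have hmp := (measurePreserving_piFinSuccAbove S 0).symm
      rw [← hmp.measure_preimage hO.nullMeasurableSet]
      exact Measure.prod_apply hO'
    rw [slice P, slice Q]
    set g : E → ℝ≥0∞ := fun y => Measure.pi (fun j : Fin k => Q j.succ)
      (Prod.mk y ⁻¹' (F.symm ⁻¹' O))
    have hgm : Measurable g := measurable_measure_prodMk_left hO'
    calc ∫⁻ y, Measure.pi (fun j : Fin k => P j.succ) (Prod.mk y ⁻¹' (F.symm ⁻¹' O)) ∂(P 0)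
        ≤ ∫⁻ y, (min 1 (e ^ k * g y) + k * r) ∂(P 0) := by
          refine lintegral_mono fun y => ?_
          rw [← min_add_add_right]
          exact le_min (prob_le_one.trans le_self_add)
            (ih _ _ _ (fun j => h j.succ) (fun j => hR j.succ) _ (measurable_prodMk_left hO'))
      _ = ∫⁻ y, min 1 (e ^ k * g y) ∂(P 0) + k * r := by
          rw [lintegral_add_right _ measurable_const]; simp
      _ ≤ ∫⁻ y, min 1 (e ^ k * g y) ∂(e • Q 0 + R 0) + k * r := by
          gcongr; exact h 0
      _ = e * ∫⁻ y, min 1 (e ^ k * g y) ∂(Q 0) + ∫⁻ y, min 1 (e ^ k * g y) ∂(R 0) + k * r := by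
          rw [lintegral_add_measure, lintegral_smul_measure, smul_eq_mul]
      _ ≤ e * ∫⁻ y, e ^ k * g y ∂(Q 0) + ∫⁻ _, 1 ∂(R 0) + k * r := by
          gcongr
          · exact min_le_right _ _
          · exact min_le_left _ _
      _ ≤ e * (e ^ k * ∫⁻ y, g y ∂(Q 0)) + r + k * r := by
          rw [lintegral_const_mul _ hgm, lintegral_one]
          gcongr
          exact hR 0
      _ = e ^ (k + 1) * ∫⁻ y, g y ∂(Q 0) + (k + 1 : ℕ) * r := by
          push_cast; ring

/-- The empirical mean of vectors of norm at most `C` has `ℓ²`-sensitivity `2 C / n`. -/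
lemma norm_mean_sub_le {X : Type*} {n d : ℕ} {C : ℝ}
    {f : X → EuclideanSpace ℝ (Fin d)} (hf : ∀ x, ‖f x‖ ≤ C) {D D' : Fin n → X}
    (h : Neighbors D D') :
    ‖(1 / (n : ℝ)) • (∑ i, f (D i)) - (1 / (n : ℝ)) • (∑ i, f (D' i))‖ ≤ 2 * C / n := by
  obtain ⟨j, -, hj⟩ := h
  rw [← smul_sub, ← Finset.sum_sub_distrib, Finset.sum_eq_single j
    (fun i _ hi => by rw [hj i hi, sub_self]) (by simp), norm_smul, Real.norm_eq_abs,
    abs_of_nonneg (by positivity)]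
  have h1 : ‖f (D j) - f (D' j)‖ ≤ 2 * C :=
    (norm_sub_le _ _).trans (by linarith [hf (D j), hf (D' j)])
  calc 1 / (n : ℝ) * ‖f (D j) - f (D' j)‖ ≤ 1 / (n : ℝ) * (2 * C) := by gcongr
    _ = 2 * C / n := by ring

/-- **Theorem 4.1, full statement.** Jointly releasing, for each of `L` layers,
the noisy empirical mean of per-example clipped vectors `φ ℓ (D i)` (each of
norm at most `C ℓ`) with independent Gaussian noise of scale
`σ ℓ ≥ (2 C ℓ / n) √(2 ln(1.25/δ)) / ε` is `(Lε, Lδ)`-differentially private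
under the substitution neighboring relation. -/
theorem dataset_vectors_dp_all_layers {X : Type*} [MeasurableSpace X] {n d L : ℕ}
    (hn : 1 ≤ n) (hd : 1 ≤ d) (hL : 1 ≤ L)
    (C : Fin L → ℝ) (hC : ∀ ℓ, 0 < C ℓ)
    (φ : Fin L → X → EuclideanSpace ℝ (Fin d)) (hφ : ∀ ℓ, Measurable (φ ℓ))
    (hclip : ∀ ℓ (x : X), ‖φ ℓ x‖ ≤ C ℓ)
    {ε δ : ℝ} (σ : Fin L → ℝ) (hε : 0 < ε) (hε1 : ε ≤ 1) (hδ0 : 0 < δ) (hδ1 : δ < 1)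
    (hσ : ∀ ℓ, σ ℓ ≥ (2 * C ℓ / n) * Real.sqrt (2 * Real.log (1.25 / δ)) / ε) :
    DP (fun D : Fin n → X => Measure.pi (fun ℓ : Fin L =>
        (gaussianMeasure d (σ ℓ)).map
          (fun x => (1 / (n : ℝ)) • (∑ i, φ ℓ (D i)) + x)))
      ((L : ℝ) * ε) ((L : ℝ) * δ) := by
  intro D D' hDD O hO
  have hn0 : (0 : ℝ) < n := by exact_mod_cast hn
  have hlog : 0 < Real.log (1.25 / δ) := by
    apply Real.log_pos
    rw [lt_div_iff₀ hδ0]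
    linarith
  have hs0 : 0 < 2 * Real.log (1.25 / δ) := by linarith
  have hσ0 : ∀ ℓ, 0 < σ ℓ := fun ℓ => by
    have := hC ℓ
    exact lt_of_lt_of_le (by positivity) (hσ ℓ)
  have layer : ∀ ℓ, ∃ R : Measure (EuclideanSpace ℝ (Fin d)),
      (gaussianMeasure d (σ ℓ)).map (fun x => (1 / (n : ℝ)) • (∑ i, φ ℓ (D i)) + x) ≤
        ENNReal.ofReal (Real.exp ε) •
          (gaussianMeasure d (σ ℓ)).map (fun x => (1 / (n : ℝ)) • (∑ i, φ ℓ (D' i)) + x) + R ∧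
      R Set.univ ≤ ENNReal.ofReal δ := by
    intro ℓ
    have := isProbabilityMeasure_gaussianMeasure d (hσ0 ℓ)
    have hu := norm_mean_sub_le (hclip ℓ) hDD
    generalize (1 / (n : ℝ)) • (∑ i, φ ℓ (D i)) = a at hu ⊢
    generalize (1 / (n : ℝ)) • (∑ i, φ ℓ (D' i)) = b at hu ⊢
    have ht : ‖a - b‖ ^ 2 / σ ℓ ^ 2 ≤ ε ^ 2 / (2 * Real.log (1.25 / δ)) := by
      have h1 : ‖a - b‖ * √(2 * Real.log (1.25 / δ)) ≤ σ ℓ * ε := by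
        rw [← div_le_iff₀ hε]
        refine le_trans ?_ (hσ ℓ)
        gcongr
      have h2 := pow_le_pow_left₀ (by positivity) h1 2
      rw [mul_pow, mul_pow, Real.sq_sqrt hs0.le] at h2
      have := hσ0 ℓ
      rw [div_le_div_iff₀ (by positivity) hs0]
      linarith
    obtain ⟨k, c, -, hc0, hc, hle⟩ := exists_tilt hε hε1 hδ0 hδ1 ht
    refine ⟨_, gaussian_translate_le (hσ0 ℓ) hc0 hc a b, ?_⟩
    rw [Measure.smul_apply, Measure.map_apply (measurable_const_add _) MeasurableSet.univ,
      Set.preimage_univ, measure_univ, smul_eq_mul, mul_one]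
    exact ENNReal.ofReal_le_ofReal hle
  choose R hR1 hR2 using layer
  have prob : ∀ (D : Fin n → X) (ℓ : Fin L), IsProbabilityMeasure
      ((gaussianMeasure d (σ ℓ)).map (fun x => (1 / (n : ℝ)) • (∑ i, φ ℓ (D i)) + x)) := by
    intro D ℓ
    have := isProbabilityMeasure_gaussianMeasure d (hσ0 ℓ)
    exact Measure.isProbabilityMeasure_map (measurable_const_add _).aemeasurable
  have hp := prob D
  have hq := prob D'
  have key := pi_le_of_le _ _ L _ _ R hR1 hR2 O hO
  rwa [← ENNReal.ofReal_pow (Real.exp_pos ε).le, ← Real.exp_nat_mul,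
    ← ENNReal.ofReal_natCast, ← ENNReal.ofReal_mul (Nat.cast_nonneg L)] at key
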